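/- If the stepsize parameter satisfies 0 < ε ≤ 2π(λ/Λ)², then for every x ∈ ℝⁿ the expected one-step descent inequality holds: Σᵢ pᵢ F(x^(i)) ≤ F(x) − (ελ − ε²Λ²/(2λπ))‖g(x)‖², and moreover the coefficient ελ − ε²Λ²/(2λπ) is nonnegative. -/

import Mathlib

open Matrix BigOperators

noncomputable section

/-- Second derivative of the `i`-th local objective. -/
def d2 {n : ℕ} (f : Fin n → ℝ → ℝ) (i : Fin n) (s : ℝ) : ℝ := deriv (deriv (f i)) s

/-- The diagonal matrix `G(x)` with `G(x)_ii = f_i''(x_i)`. -/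
def Gmat {n : ℕ} (f : Fin n → ℝ → ℝ) (x : Fin n → ℝ) : Matrix (Fin n) (Fin n) ℝ :=
  Matrix.diagonal (fun i => d2 f i (x i))

/-- The Hessian `H(x) = I − W + αG(x)` of the penalized objective. -/
def Hmat {n : ℕ} (W : Matrix (Fin n) (Fin n) ℝ) (f : Fin n → ℝ → ℝ) (α : ℝ)
    (x : Fin n → ℝ) : Matrix (Fin n) (Fin n) ℝ :=
  1 - W + α • Gmat f x

/-- `B = I − 2W_d + W`. -/
def Bmat {n : ℕ} (W : Matrix (Fin n) (Fin n) ℝ) : Matrix (Fin n) (Fin n) ℝ :=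
  1 - (2 : ℝ) • Matrix.diagonal (fun i => W i i) + W

/-- Diagonal entries of the splitting matrix `D(x) = αG(x) + 2(I − W_d)`. -/
def dEntry {n : ℕ} (W : Matrix (Fin n) (Fin n) ℝ) (f : Fin n → ℝ → ℝ) (α : ℝ)
    (x : Fin n → ℝ) (i : Fin n) : ℝ :=
  α * d2 f i (x i) + 2 * (1 - W i i)

/-- `D(x) = αG(x) + 2(I − W_d)`. -/
def Dmat {n : ℕ} (W : Matrix (Fin n) (Fin n) ℝ) (f : Fin n → ℝ → ℝ) (α : ℝ)
    (x : Fin n → ℝ) : Matrix (Fin n) (Fin n) ℝ :=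
  Matrix.diagonal (dEntry W f α x)

/-- `D(x)^{1/2}`. -/
def Dhalf {n : ℕ} (W : Matrix (Fin n) (Fin n) ℝ) (f : Fin n → ℝ → ℝ) (α : ℝ)
    (x : Fin n → ℝ) : Matrix (Fin n) (Fin n) ℝ :=
  Matrix.diagonal (fun i => Real.sqrt (dEntry W f α x i))

/-- `D(x)^{-1/2}`. -/
def Dinvhalf {n : ℕ} (W : Matrix (Fin n) (Fin n) ℝ) (f : Fin n → ℝ → ℝ) (α : ℝ)
    (x : Fin n → ℝ) : Matrix (Fin n) (Fin n) ℝ :=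
  Matrix.diagonal (fun i => (Real.sqrt (dEntry W f α x i))⁻¹)

/-- The approximate Hessian inverse
`Ĥ(x)⁻¹ = D(x)^{-1/2}(I + D(x)^{-1/2} B D(x)^{-1/2}) D(x)^{-1/2}`. -/
def Hhatinv {n : ℕ} (W : Matrix (Fin n) (Fin n) ℝ) (f : Fin n → ℝ → ℝ) (α : ℝ)
    (x : Fin n → ℝ) : Matrix (Fin n) (Fin n) ℝ :=
  Dinvhalf W f α x * (1 + Dinvhalf W f α x * Bmat W * Dinvhalf W f α x) * Dinvhalf W f α x

/-- The penalized objective `F(x) = (1/2) xᵀ(I−W)x + α Σᵢ f_i(x_i)`. -/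
def Fobj {n : ℕ} (W : Matrix (Fin n) (Fin n) ℝ) (f : Fin n → ℝ → ℝ) (α : ℝ)
    (x : Fin n → ℝ) : ℝ :=
  (1 / 2) * (x ⬝ᵥ ((1 - W).mulVec x)) + α * ∑ i, f i (x i)

/-- The gradient `g(x) = (I − W)x + α (f_i'(x_i))_i` of the penalized objective. -/
def gvec {n : ℕ} (W : Matrix (Fin n) (Fin n) ℝ) (f : Fin n → ℝ → ℝ) (α : ℝ)
    (x : Fin n → ℝ) : Fin n → ℝ :=
  fun i => ((1 - W).mulVec x) i + α * deriv (f i) (x i)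

/-- The asynchronous update `x^(i)`: agent `i` moves along the approximate Newton
direction with stepsize `ε / p i`; other coordinates are unchanged. -/
def upd {n : ℕ} (W : Matrix (Fin n) (Fin n) ℝ) (f : Fin n → ℝ → ℝ) (α : ℝ)
    (p : Fin n → ℝ) (ε : ℝ) (x : Fin n → ℝ) (i : Fin n) : Fin n → ℝ :=
  Function.update x i (x i - (ε / p i) * ((Hhatinv W f α x).mulVec (gvec W f α x)) i)

/-- Euclidean norm on `ℝⁿ`. -/
def enorm {n : ℕ} (v : Fin n → ℝ) : ℝ := Real.sqrt (∑ i, v i ^ 2)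

/-!
Row sums make both `B` and `2(I − W_d) − B = I − W` diagonally dominant, so Gershgorin's theorem
gives `0 ≤ B ≤ 2(I − W_d) ≤ ρD` in the Loewner order. Conjugating by `D⁻¹` in
`Ĥ⁻¹ = D⁻¹ + D⁻¹BD⁻¹` yields `λI ≤ D⁻¹ ≤ Ĥ⁻¹ ≤ (1 + ρ)D⁻¹ ≤ ΛI`.

Along each coordinate `F` has curvature at most `1/λ`. In the Taylor bound for a step of size
`ε/pᵢ` the sampling probability cancels at first order, so the expected change of `F` is at most
`−ε gᵀĤ⁻¹g + ε²/(2λπ) ‖Ĥ⁻¹g‖² ≤ −(ελ − ε²Λ²/(2λπ)) ‖g‖²`.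
-/

section QuadraticForms

open scoped MatrixOrder

variable {ι : Type*}

theorem diagonal_le_diagonal [DecidableEq ι] {d e : ι → ℝ} (h : d ≤ e) :
    diagonal d ≤ diagonal e := by
  rw [le_iff, diagonal_sub, posSemidef_diagonal_iff]
  exact fun i => sub_nonneg.mpr (h i)

theorem dotProduct_mulVec_le_of_le [Fintype ι] {A B : Matrix ι ι ℝ} (h : A ≤ B) (u : ι → ℝ) :
    u ⬝ᵥ A *ᵥ u ≤ u ⬝ᵥ B *ᵥ u := by
  have := (le_iff.mp h).dotProduct_mulVec_nonneg u
  rwa [star_trivial, sub_mulVec, dotProduct_sub, sub_nonneg] at this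

variable [Fintype ι] [DecidableEq ι]

theorem posSemidef_of_sum_row_le_diag {A : Matrix ι ι ℝ} (hA : A.IsSymm)
    (h : ∀ i, ∑ j ∈ Finset.univ.erase i, |A i j| ≤ A i i) : A.PosSemidef := by
  refine posSemidef_iff_isHermitian_and_spectrum_nonneg.mpr
    ⟨isHermitian_iff_isSymm.mpr hA, fun μ hμ => ?_⟩
  rw [← spectrum_toLin', ← Module.End.hasEigenvalue_iff_mem_spectrum] at hμ
  obtain ⟨i, hi⟩ := eigenvalue_mem_ball hμ
  rw [Metric.mem_closedBall, Real.dist_eq] at hi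
  exact Set.mem_ofPred.mpr (by linarith [(abs_le.mp (hi.trans (h i))).1])

theorem sq_le_smul_one_of_le_smul_one {A : Matrix ι ι ℝ} {L : ℝ} (hL : 0 ≤ L) (h₀ : 0 ≤ A)
    (h : A ≤ L • 1) : A * A ≤ L ^ 2 • (1 : Matrix ι ι ℝ) := by
  have hcomm : Commute A (L • 1 - A) :=
    ((Commute.one_right A).smul_right L).sub_right (Commute.refl A)
  have hAA : A * A ≤ L • A := by
    simpa only [mul_sub, Matrix.mul_smul, mul_one, sub_nonneg]
      using hcomm.mul_nonneg h₀ (sub_nonneg.mpr h)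
  calc A * A ≤ L • A := hAA
    _ ≤ L • L • 1 := smul_le_smul_of_nonneg_left h hL
    _ = L ^ 2 • 1 := by rw [smul_smul, sq]

theorem mulVec_dotProduct_mulVec_le {A : Matrix ι ι ℝ} {L : ℝ} (hL : 0 ≤ L) (h₀ : 0 ≤ A)
    (h : A ≤ L • 1) (u : ι → ℝ) : A *ᵥ u ⬝ᵥ A *ᵥ u ≤ L ^ 2 * (u ⬝ᵥ u) := by
  have hA : A.IsSymm := isHermitian_iff_isSymm.mp (nonneg_iff_posSemidef.mp h₀).isHermitian
  calc A *ᵥ u ⬝ᵥ A *ᵥ u = u ⬝ᵥ (A * A) *ᵥ u := by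
        rw [← mulVec_mulVec, dotProduct_mulVec u, ← mulVec_transpose, hA.eq]
    _ ≤ u ⬝ᵥ (L ^ 2 • (1 : Matrix ι ι ℝ)) *ᵥ u :=
        dotProduct_mulVec_le_of_le (sq_le_smul_one_of_le_smul_one hL h₀ h) u
    _ = L ^ 2 * (u ⬝ᵥ u) := by rw [smul_mulVec, one_mulVec, dotProduct_smul, smul_eq_mul]

theorem add_single_dotProduct_mulVec_add_single {R : Type*} [CommSemiring R] {A : Matrix ι ι R}
    (hA : A.IsSymm) (x : ι → R) (i : ι) (t : R) :
    (x + Pi.single i t) ⬝ᵥ A *ᵥ (x + Pi.single i t) =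
      x ⬝ᵥ A *ᵥ x + 2 * t * (A *ᵥ x) i + A i i * t ^ 2 := by
  have hcross : x ⬝ᵥ A *ᵥ Pi.single i t = t * (A *ᵥ x) i := by
    rw [dotProduct_mulVec, ← mulVec_transpose, hA.eq, dotProduct_single, mul_comm]
  have hdiag : (A *ᵥ Pi.single i t) i = A i i * t := by simp [mulVec_single]
  rw [mulVec_add, add_dotProduct, dotProduct_add, dotProduct_add, single_dotProduct,
    single_dotProduct, hcross, hdiag]
  ring

end QuadraticForms

section CoordinateDescent

theorem le_add_deriv_mul_add_sq_of_deriv_deriv_le {f : ℝ → ℝ} {M : ℝ} (hf : ContDiff ℝ 2 f)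
    (hM : ∀ s, deriv (deriv f) s ≤ M) (a t : ℝ) :
    f (a + t) ≤ f a + t * deriv f a + M / 2 * t ^ 2 := by
  rcases eq_or_ne t 0 with rfl | ht
  · simp
  have hne : a ≠ a + t := by simpa using ht
  obtain ⟨ξ, -, hξ⟩ := taylor_mean_remainder_lagrange_iteratedDeriv (n := 1) hne
    (hf.contDiffOn.of_le (by norm_num))
  have hderiv : derivWithin f (Set.uIcc a (a + t)) a = deriv f a :=
    (hf.differentiable (by norm_num) a).derivWithin
      (uniqueDiffOn_uIcc hne a Set.left_mem_uIcc)
  simp only [taylorWithinEval_succ, taylor_within_zero_eval, Nat.cast_zero, zero_add,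
    Nat.factorial_zero, Nat.cast_one, mul_one, inv_one, add_sub_cancel_left, pow_one, one_mul,
    iteratedDerivWithin_one, hderiv, smul_eq_mul, Nat.reduceAdd, iteratedDeriv_succ,
    iteratedDeriv_zero, Nat.factorial_two, Nat.cast_ofNat] at hξ
  nlinarith [mul_le_mul_of_nonneg_right (hM ξ) (sq_nonneg t)]

theorem descent_coeff_nonneg {ε lam Lam q : ℝ} (hε : 0 ≤ ε) (hlam : 0 < lam) (hLam : 0 < Lam)
    (hq : 0 < q) (h : ε ≤ 2 * q * (lam / Lam) ^ 2) :
    0 ≤ ε * lam - ε ^ 2 * Lam ^ 2 / (2 * lam * q) := by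
  have hfactor : ε * lam - ε ^ 2 * Lam ^ 2 / (2 * lam * q) =
      ε * Lam ^ 2 / (2 * lam * q) * (2 * q * (lam / Lam) ^ 2 - ε) := by field_simp
  rw [hfactor]
  exact mul_nonneg (by positivity) (sub_nonneg.mpr h)

variable {ι : Type*} [Fintype ι] [DecidableEq ι] {F : (ι → ℝ) → ℝ} {x g p : ι → ℝ} {L q : ℝ}

theorem sum_mul_update_le (hL : 0 ≤ L) (hq : 0 < q) (hp : ∀ i, q ≤ p i) (hpsum : ∑ i, p i = 1)
    (hF : ∀ i t, F (Function.update x i (x i + t)) ≤ F x + t * g i + L / 2 * t ^ 2)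
    (v : ι → ℝ) (ε : ℝ) :
    ∑ i, p i * F (Function.update x i (x i - ε / p i * v i)) ≤
      F x - ε * (g ⬝ᵥ v) + ε ^ 2 * L / (2 * q) * (v ⬝ᵥ v) := by
  have hstep (i : ι) : p i * F (Function.update x i (x i - ε / p i * v i)) ≤
      p i * F x - ε * (g i * v i) + ε ^ 2 * L / (2 * q) * (v i * v i) := by
    have hpi : 0 < p i := hq.trans_le (hp i)
    calc p i * F (Function.update x i (x i - ε / p i * v i))
        ≤ p i * (F x + -(ε / p i * v i) * g i + L / 2 * (-(ε / p i * v i)) ^ 2) := by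
          rw [sub_eq_add_neg]
          gcongr
          exact hF i _
      _ = p i * F x - ε * (g i * v i) + ε ^ 2 * L / (2 * p i) * (v i * v i) := by
          field_simp
          ring
      _ ≤ p i * F x - ε * (g i * v i) + ε ^ 2 * L / (2 * q) * (v i * v i) := by
          have := mul_self_nonneg (v i)
          gcongr
          exact hp i
  refine (Finset.sum_le_sum fun i _ => hstep i).trans_eq ?_
  simp only [Finset.sum_add_distrib, Finset.sum_sub_distrib, ← Finset.sum_mul, ← Finset.mul_sum,
    hpsum, one_mul, dotProduct]

open scoped MatrixOrder in
theorem sum_mul_update_mulVec_le {H : Matrix ι ι ℝ} {lam Lam ε : ℝ} (hL : 0 ≤ L) (hq : 0 < q)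
    (hp : ∀ i, q ≤ p i) (hpsum : ∑ i, p i = 1)
    (hF : ∀ i t, F (Function.update x i (x i + t)) ≤ F x + t * g i + L / 2 * t ^ 2)
    (hlam : 0 ≤ lam) (hLam : 0 ≤ Lam) (hlamH : lam • 1 ≤ H) (hHLam : H ≤ Lam • 1) (hε : 0 ≤ ε) :
    ∑ i, p i * F (Function.update x i (x i - ε / p i * (H *ᵥ g) i)) ≤
      F x - (ε * lam - ε ^ 2 * L * Lam ^ 2 / (2 * q)) * (g ⬝ᵥ g) := by
  have hH : 0 ≤ H := (smul_nonneg hlam zero_le_one).trans hlamH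
  have hinner : lam * (g ⬝ᵥ g) ≤ g ⬝ᵥ H *ᵥ g := by
    simpa only [smul_mulVec, one_mulVec, dotProduct_smul, smul_eq_mul]
      using dotProduct_mulVec_le_of_le hlamH g
  have hnorm := mulVec_dotProduct_mulVec_le hLam hH hHLam g
  calc ∑ i, p i * F (Function.update x i (x i - ε / p i * (H *ᵥ g) i))
      ≤ F x - ε * (g ⬝ᵥ H *ᵥ g) + ε ^ 2 * L / (2 * q) * (H *ᵥ g ⬝ᵥ H *ᵥ g) :=
        sum_mul_update_le hL hq hp hpsum hF _ ε
    _ ≤ F x - ε * (lam * (g ⬝ᵥ g)) + ε ^ 2 * L / (2 * q) * (Lam ^ 2 * (g ⬝ᵥ g)) := by gcongr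
    _ = F x - (ε * lam - ε ^ 2 * L * Lam ^ 2 / (2 * q)) * (g ⬝ᵥ g) := by ring

end CoordinateDescent

section Objective

variable {n : ℕ} {W : Matrix (Fin n) (Fin n) ℝ} {f : Fin n → ℝ → ℝ} {α : ℝ}

theorem Fobj_update_add_le {M : ℝ} (hW : W.IsSymm) (hf : ∀ i, ContDiff ℝ 2 (f i))
    (hM : ∀ i s, d2 f i s ≤ M) (hα : 0 ≤ α) (x : Fin n → ℝ) (i : Fin n) (t : ℝ) :
    Fobj W f α (Function.update x i (x i + t)) ≤
      Fobj W f α x + t * gvec W f α x i + (1 - W i i + α * M) / 2 * t ^ 2 := by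
  have hupdate : Function.update x i (x i + t) = x + Pi.single i t := by
    ext j
    rcases eq_or_ne j i with rfl | h <;> simp [*]
  have hsum : ∑ j, f j (Function.update x i (x i + t) j) =
      ∑ j, f j (x j) + (f i (x i + t) - f i (x i)) := by
    rw [← sub_eq_iff_eq_add', ← Finset.sum_sub_distrib,
      Fintype.sum_eq_single i (by simp +contextual)]
    simp
  have hquad := add_single_dotProduct_mulVec_add_single (isSymm_one.sub hW) x i t
  have htaylor := mul_le_mul_of_nonneg_left
    (le_add_deriv_mul_add_sq_of_deriv_deriv_le (hf i) (hM i) (x i) t) hα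
  rw [Matrix.sub_apply, one_apply_eq] at hquad
  simp only [Fobj, gvec, hsum]
  rw [hupdate, hquad]
  linarith

end Objective

section ApproximateHessian

variable {n : ℕ} {W : Matrix (Fin n) (Fin n) ℝ} {f : Fin n → ℝ → ℝ} {α : ℝ} {x : Fin n → ℝ}

open scoped MatrixOrder

theorem Bmat_apply_self (i : Fin n) : Bmat W i i = 1 - W i i := by
  simp only [Bmat, Matrix.add_apply, Matrix.sub_apply, one_apply_eq, Matrix.smul_apply,
    diagonal_apply_eq, smul_eq_mul]
  ring

theorem Bmat_apply_of_ne {i j : Fin n} (h : i ≠ j) : Bmat W i j = W i j := by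
  simp [Bmat, h]

theorem Bmat_nonneg (hW : W.IsSymm)
    (hdom : ∀ i, ∑ j ∈ Finset.univ.erase i, |W i j| ≤ 1 - W i i) : 0 ≤ Bmat W := by
  have hsymm : (Bmat W).IsSymm :=
    (isSymm_one.sub ((isSymm_diagonal _).smul _)).add hW
  refine (posSemidef_of_sum_row_le_diag hsymm fun i => ?_).nonneg
  rw [Bmat_apply_self]
  refine (Finset.sum_congr rfl fun j hj => ?_).trans_le (hdom i)
  rw [Bmat_apply_of_ne (Finset.ne_of_mem_erase hj).symm]

theorem Bmat_le_diagonal (hW : W.IsSymm)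
    (hdom : ∀ i, ∑ j ∈ Finset.univ.erase i, |W i j| ≤ 1 - W i i) :
    Bmat W ≤ diagonal fun i => 2 * (1 - W i i) := by
  have hsub : (diagonal fun i => 2 * (1 - W i i)) - Bmat W = 1 - W := by
    ext i j
    rcases eq_or_ne i j with rfl | h
    · simp only [Matrix.sub_apply, diagonal_apply_eq, Bmat_apply_self, one_apply_eq]
      ring
    · simp [Bmat_apply_of_ne, h]
  rw [le_iff, hsub]
  refine posSemidef_of_sum_row_le_diag (isSymm_one.sub hW) fun i => ?_
  rw [Matrix.sub_apply, one_apply_eq]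
  refine (Finset.sum_congr rfl fun j hj => ?_).trans_le (hdom i)
  rw [Matrix.sub_apply, one_apply_ne (Finset.ne_of_mem_erase hj).symm, zero_sub, abs_neg]

theorem Bmat_le_smul_Dmat {ρ : ℝ} (hW : W.IsSymm)
    (hdom : ∀ i, ∑ j ∈ Finset.univ.erase i, |W i j| ≤ 1 - W i i)
    (hρ : ∀ i, 2 * (1 - W i i) ≤ ρ * dEntry W f α x i) : Bmat W ≤ ρ • Dmat W f α x := by
  rw [Dmat, ← diagonal_smul]
  exact (Bmat_le_diagonal hW hdom).trans (diagonal_le_diagonal hρ)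

theorem Hhatinv_eq (hd : ∀ i, 0 ≤ dEntry W f α x i) :
    Hhatinv W f α x = diagonal (dEntry W f α x)⁻¹ +
      diagonal (dEntry W f α x)⁻¹ * Bmat W * diagonal (dEntry W f α x)⁻¹ := by
  have hsq : Dinvhalf W f α x * Dinvhalf W f α x = diagonal (dEntry W f α x)⁻¹ := by
    rw [Dinvhalf, diagonal_mul_diagonal]
    congr! with i
    rw [← mul_inv, Real.mul_self_sqrt (hd i), Pi.inv_apply]
  rw [← hsq, Hhatinv]
  noncomm_ring

theorem smul_one_le_Hhatinv {c : ℝ} (hB : 0 ≤ Bmat W) (hd : ∀ i, 0 < dEntry W f α x i)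
    (hc : ∀ i, dEntry W f α x i ≤ c) : c⁻¹ • 1 ≤ Hhatinv W f α x := by
  rw [Hhatinv_eq fun i => (hd i).le, smul_one_eq_diagonal]
  refine le_add_of_le_of_nonneg (diagonal_le_diagonal fun i => ?_)
    ((isHermitian_diagonal _).isSelfAdjoint.conjugate_nonneg hB)
  exact inv_anti₀ (hd i) (hc i)

theorem Hhatinv_le_smul_one {c ρ : ℝ} (hρ : 0 ≤ ρ) (hB : Bmat W ≤ ρ • Dmat W f α x)
    (hc₀ : 0 < c) (hc : ∀ i, c ≤ dEntry W f α x i) :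
    Hhatinv W f α x ≤ ((1 + ρ) / c) • 1 := by
  have hd (i : Fin n) : 0 < dEntry W f α x i := hc₀.trans_le (hc i)
  set E : Matrix (Fin n) (Fin n) ℝ := diagonal (dEntry W f α x)⁻¹ with hE
  have hEself : IsSelfAdjoint E := (isHermitian_diagonal _).isSelfAdjoint
  have hEDE : E * Dmat W f α x * E = E := by
    rw [hE, Dmat, diagonal_mul_diagonal, diagonal_mul_diagonal]
    congr! with i
    simp [(hd i).ne']
  have hEle : E ≤ c⁻¹ • 1 := by
    rw [hE, smul_one_eq_diagonal]
    exact diagonal_le_diagonal fun i => inv_anti₀ hc₀ (hc i)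
  calc Hhatinv W f α x = E + E * Bmat W * E := Hhatinv_eq fun i => (hd i).le
    _ ≤ E + E * (ρ • Dmat W f α x) * E := by gcongr; exact hEself.conjugate_le_conjugate hB
    _ = (1 + ρ) • E := by rw [Matrix.mul_smul, Matrix.smul_mul, hEDE, add_smul, one_smul]
    _ ≤ (1 + ρ) • c⁻¹ • 1 := smul_le_smul_of_nonneg_left hEle (by positivity)
    _ = ((1 + ρ) / c) • 1 := by rw [smul_smul, div_eq_mul_inv]

theorem add_le_dEntry {Δ m : ℝ} {i : Fin n} (hα : 0 ≤ α) (hW : W i i ≤ Δ)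
    (hm : m ≤ d2 f i (x i)) : 2 * (1 - Δ) + α * m ≤ dEntry W f α x i := by
  rw [dEntry]
  linarith [mul_le_mul_of_nonneg_left hm hα]

theorem dEntry_le_add {δ M : ℝ} {i : Fin n} (hα : 0 ≤ α) (hW : δ ≤ W i i)
    (hM : d2 f i (x i) ≤ M) : dEntry W f α x i ≤ 2 * (1 - δ) + α * M := by
  rw [dEntry]
  linarith [mul_le_mul_of_nonneg_left hM hα]

-- `s ↦ s / (s + αm)` is increasing, so the ratio is largest at the smallest self-weight `δ`.
theorem two_mul_one_sub_le_mul_dEntry {δ m : ℝ} {i : Fin n} (hα : 0 ≤ α) (hm₀ : 0 ≤ m)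
    (hδ : δ < 1) (hW : δ ≤ W i i) (hm : m ≤ d2 f i (x i)) :
    2 * (1 - W i i) ≤ 2 * (1 - δ) / (2 * (1 - δ) + α * m) * dEntry W f α x i := by
  have hαm : 0 ≤ α * m := mul_nonneg hα hm₀
  have hnum : 0 < 2 * (1 - δ) := mul_pos two_pos (sub_pos.mpr hδ)
  have hden : 0 < 2 * (1 - δ) + α * m := add_pos_of_pos_of_nonneg hnum hαm
  calc 2 * (1 - W i i) ≤ 2 * (1 - δ) / (2 * (1 - δ) + α * m) * (2 * (1 - W i i) + α * m) := by
        rw [div_mul_eq_mul_div, le_div_iff₀ hden]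
        nlinarith
    _ ≤ 2 * (1 - δ) / (2 * (1 - δ) + α * m) * dEntry W f α x i :=
        mul_le_mul_of_nonneg_left (add_le_dEntry hα le_rfl hm) (div_pos hnum hden).le

end ApproximateHessian

theorem sum_erase_abs_le_one_sub_of_mulVec_one {ι : Type*} [Fintype ι] [DecidableEq ι]
    {W : Matrix ι ι ℝ} (hW : ∀ i j, 0 ≤ W i j) (hone : W *ᵥ (fun _ => 1) = fun _ => 1) (i : ι) :
    ∑ j ∈ Finset.univ.erase i, |W i j| ≤ 1 - W i i := by
  have hrow : ∑ j, W i j = 1 := by simpa [mulVec, dotProduct] using congrFun hone i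
  simp only [abs_of_nonneg (hW _ _)]
  rw [← hrow, ← Finset.sum_erase_eq_sub (Finset.mem_univ i)]

open scoped MatrixOrder in
theorem stmt5_general {n : ℕ} {W : Matrix (Fin n) (Fin n) ℝ} (hWsymm : W.IsSymm)
    (hWdom : ∀ i, ∑ j ∈ Finset.univ.erase i, |W i j| ≤ 1 - W i i)
    {δ Δ : ℝ} (hδΔ : δ ≤ Δ) (hΔ : Δ < 1) (hWdiag : ∀ i, δ ≤ W i i ∧ W i i ≤ Δ)
    {f : Fin n → ℝ → ℝ} (hf : ∀ i, ContDiff ℝ 2 (f i))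
    {m M : ℝ} (hm : 0 ≤ m) (hmM : m ≤ M) (hd2 : ∀ i s, m ≤ d2 f i s ∧ d2 f i s ≤ M)
    {α : ℝ} (hα : 0 ≤ α)
    {p : Fin n → ℝ} {pmin : ℝ} (hpmin : 0 < pmin) (hp : ∀ i, pmin ≤ p i) (hpsum : ∑ i, p i = 1)
    {ρ lam Lam : ℝ} (hρ : ρ = 2 * (1 - δ) / (2 * (1 - δ) + α * m))
    (hlam : lam = 1 / (2 * (1 - δ) + α * M))
    (hLam : Lam = (1 + ρ) / (2 * (1 - Δ) + α * m)) {ε : ℝ} (hε : 0 ≤ ε) :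
    (ε ≤ 2 * pmin * (lam / Lam) ^ 2 →
      0 ≤ ε * lam - ε ^ 2 * Lam ^ 2 / (2 * lam * pmin)) ∧
    ∀ x : Fin n → ℝ,
      ∑ i, p i * Fobj W f α (upd W f α p ε x i) ≤
        Fobj W f α x
          - (ε * lam - ε ^ 2 * Lam ^ 2 / (2 * lam * pmin)) * ∑ i, gvec W f α x i ^ 2 := by
  have hδ : 0 < 1 - δ := by linarith
  have hc : 0 < 2 * (1 - Δ) + α * m := add_pos_of_pos_of_nonneg (by linarith) (mul_nonneg hα hm)
  have hM : 0 ≤ α * M := mul_nonneg hα (hm.trans hmM)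
  have hlam₀ : 0 < lam := by rw [hlam]; positivity
  have hρ₀ : 0 ≤ ρ := by rw [hρ]; positivity
  have hLam₀ : 0 < Lam := by rw [hLam]; positivity
  refine ⟨descent_coeff_nonneg hε hlam₀ hLam₀ hpmin, fun x => ?_⟩
  have hd (i : Fin n) : 2 * (1 - Δ) + α * m ≤ dEntry W f α x i :=
    add_le_dEntry hα (hWdiag i).2 (hd2 i _).1
  have hlower : lam • 1 ≤ Hhatinv W f α x := by
    rw [hlam, one_div]
    exact smul_one_le_Hhatinv (Bmat_nonneg hWsymm hWdom) (fun i => hc.trans_le (hd i))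
      fun i => dEntry_le_add hα (hWdiag i).1 (hd2 i _).2
  have hupper : Hhatinv W f α x ≤ Lam • 1 := by
    rw [hLam]
    refine Hhatinv_le_smul_one hρ₀ (Bmat_le_smul_Dmat hWsymm hWdom fun i => ?_) hc hd
    rw [hρ]
    exact two_mul_one_sub_le_mul_dEntry hα hm (by linarith) (hWdiag i).1 (hd2 i _).1
  have hsmooth (i : Fin n) (t : ℝ) : Fobj W f α (Function.update x i (x i + t)) ≤
      Fobj W f α x + t * gvec W f α x i + lam⁻¹ / 2 * t ^ 2 := by
    refine (Fobj_update_add_le hWsymm hf (fun i s => (hd2 i s).2) hα x i t).trans ?_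
    rw [hlam, one_div, inv_inv]
    gcongr
    linarith [(hWdiag i).1]
  have hdescent := sum_mul_update_mulVec_le (inv_nonneg.mpr hlam₀.le) hpmin hp hpsum hsmooth
    hlam₀.le hLam₀.le hlower hupper hε
  have hcoeff : ε ^ 2 * lam⁻¹ * Lam ^ 2 / (2 * pmin) = ε ^ 2 * Lam ^ 2 / (2 * lam * pmin) := by
    field_simp
  have hnorm : gvec W f α x ⬝ᵥ gvec W f α x = ∑ i, gvec W f α x i ^ 2 := by
    simp only [dotProduct, sq]
  rwa [hcoeff, hnorm] at hdescent

/-- Expected one-step descent: if `0 < ε ≤ 2π(λ/Λ)²` then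
`Σᵢ pᵢ F(x^(i)) ≤ F(x) − (ελ − ε²Λ²/(2λπ))‖g(x)‖²`, and the coefficient is nonnegative. -/
theorem stmt5 (n : ℕ) (hn : 1 ≤ n)
    (W : Matrix (Fin n) (Fin n) ℝ) (hWsymm : W.IsSymm)
    (hWnonneg : ∀ i j, 0 ≤ W i j) (hWlt : ∀ i j, W i j < 1)
    (hWone : W.mulVec (fun _ => 1) = fun _ => 1)
    (hWnull : ∀ x : Fin n → ℝ, ((1 - W).mulVec x = 0 ↔ ∃ c : ℝ, x = fun _ => c))
    (δ Δ : ℝ) (hδ : 0 < δ) (hδΔ : δ ≤ Δ) (hΔ : Δ < 1)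
    (hWdiag : ∀ i, δ ≤ W i i ∧ W i i ≤ Δ)
    (f : Fin n → ℝ → ℝ) (hf : ∀ i, ContDiff ℝ 2 (f i))
    (hconv : ∀ i, ConvexOn ℝ Set.univ (f i))
    (m M : ℝ) (hm : 0 < m) (hmM : m ≤ M)
    (hd2 : ∀ i s, m ≤ d2 f i s ∧ d2 f i s ≤ M)
    (α : ℝ) (hα : 0 < α)
    (p : Fin n → ℝ) (pmin pmax : ℝ) (hpmin : 0 < pmin) (hpmax : pmax < 1)
    (hp : ∀ i, pmin ≤ p i ∧ p i ≤ pmax) (hpsum : ∑ i, p i = 1)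
    (ρ lam Lam : ℝ) (hρ : ρ = 2 * (1 - δ) / (2 * (1 - δ) + α * m))
    (hlam : lam = 1 / (2 * (1 - δ) + α * M))
    (hLam : Lam = (1 + ρ) / (2 * (1 - Δ) + α * m))
    (ε : ℝ) (hε : 0 < ε) (hεle : ε ≤ 2 * pmin * (lam / Lam) ^ 2) :
    0 ≤ ε * lam - ε ^ 2 * Lam ^ 2 / (2 * lam * pmin) ∧
    ∀ x : Fin n → ℝ,
      ∑ i, p i * Fobj W f α (upd W f α p ε x i) ≤
        Fobj W f α x
          - (ε * lam - ε ^ 2 * Lam ^ 2 / (2 * lam * pmin)) * ∑ i, gvec W f α x i ^ 2 := by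
  have h := stmt5_general hWsymm (sum_erase_abs_le_one_sub_of_mulVec_one hWnonneg hWone) hδΔ hΔ
    hWdiag hf hm.le hmM hd2 hα.le hpmin (fun i => (hp i).1) hpsum hρ hlam hLam hε.le
  exact ⟨h.1 hεle, h.2⟩
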